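/- Let n = p1⋯pk be a positive squarefree integer with all prime factors p_i ≡ 1 (mod 4), let K = ℚ(√−n) with ideal class group A, and let R be the Rédei matrix of K. Let d | n, r ∈ {0,1}, assume 2^r·d ∈ N(K^×) and 2^r·d ∉ {1, n}, and let (a, b, c) be a primitive positive integer solution of 2^r·z² = d·x² + (n/d)·y². Let 𝔡 be the ideal of O_K given by the product of the ramified prime ideals above the primes dividing d, multiplied by the r-th power of the ramified prime ideal above 2. Then the ideal class [𝔡] lies in 4A if and only if C lies in the column image of R, where C = ([c/p_1], …, [c/p_k])^T ∈ F_2^k. -/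

import Mathlib

open NumberField
open scoped nonZeroDivisors

open Classical in
/-- The additive Legendre symbol `[a/p] ∈ F₂`: `0` if `a` is a square mod `p`, `1` otherwise. -/
noncomputable def aLeg (a : ℤ) (p : ℕ) : ZMod 2 :=
  if IsSquare ((a : ZMod p)) then 0 else 1

/-- The Rédei matrix of `ℚ(√−n)`, `n = p₁⋯p_k` with all `p_i ≡ 1 (mod 4)` (so `D = −4n`):
the `k × (k+1)` matrix over `F₂` with `r_{ij} = [p_j/p_i]` for `i ≠ j`,
`r_{ii} = [(D/p_i)/p_i]`, and last column `[2/p_i]`. -/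
noncomputable def redeiOfN (n k : ℕ) (p : Fin k → ℕ) :
    Matrix (Fin k) (Fin k ⊕ Unit) (ZMod 2) :=
  Matrix.of fun i j =>
    Sum.elim
      (fun j' : Fin k =>
        if i = j' then aLeg ((-4 * (n : ℤ)) / (p i : ℤ)) (p i) else aLeg (p j') (p i))
      (fun _ => aLeg 2 (p i)) j

/-- Data of the conjugation on the ring of integers of an imaginary quadratic field. -/
structure QD (n : ℕ) {K : Type} [Field K] [NumberField K] (ω : 𝓞 K) (σ : 𝓞 K ≃+* 𝓞 K) :
    Prop where
  fr : Module.finrank ℤ (𝓞 K) = 2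
  sq : ω * ω = -(n : 𝓞 K)
  sw : σ ω = -ω
  norm : ∀ x, x * σ x = ((Algebra.norm ℤ x : ℤ) : 𝓞 K)
  rep : ∀ x : 𝓞 K, ∃ s : ℕ, 0 < s ∧ ∃ u v : ℤ, (s : 𝓞 K) * x = u + v * ω

lemma exists_QD (n : ℕ) (hn : 0 < n) (K : Type) [Field K] [NumberField K]
    (hdeg : Module.finrank ℚ K = 2) (ω : 𝓞 K) (hω : (ω : K) ^ 2 = -(n : K)) :
    ∃ σ : 𝓞 K ≃+* 𝓞 K, QD n ω σ := by
  have : Algebra.IsQuadraticExtension ℚ K := { finrank_eq_two' := hdeg }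
  have hcard : Nat.card (K ≃ₐ[ℚ] K) = 2 := by rw [IsGalois.card_aut_eq_finrank, hdeg]
  have hnr : ∀ q : ℚ, (q : K) ≠ (ω : K) := by
    intro q hq
    rw [← hq] at hω
    have h2 : q ^ 2 = -(n : ℚ) := by exact_mod_cast hω
    have : (0 : ℚ) < n := by exact_mod_cast hn
    nlinarith [sq_nonneg q]
  have hli : LinearIndependent ℚ ![(1 : K), (ω : K)] := by
    rw [LinearIndependent.pair_iff]
    intro s t h
    have ht : t = 0 := by
      by_contra ht
      apply hnr (-s / t)
      have ht' : (t : K) ≠ 0 := by exact_mod_cast ht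
      rw [Algebra.smul_def, Algebra.smul_def] at h
      simp only [eq_ratCast, mul_one] at h
      push_cast
      rw [div_eq_iff ht']
      linear_combination -h
    subst ht
    simpa using h
  have hspan : ∀ x : K, ∃ u v : ℚ, x = u + v * (ω : K) := by
    intro x
    have hs := hli.span_eq_top_of_card_eq_finrank' (by simp [hdeg])
    have hx : x ∈ Submodule.span ℚ (Set.range ![(1 : K), (ω : K)]) := by rw [hs]; trivial
    simp only [Matrix.range_cons, Matrix.range_empty, Set.union_empty, Set.singleton_union] at hx
    rw [Submodule.mem_span_pair] at hx
    obtain ⟨u, v, h⟩ := hx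
    refine ⟨u, v, ?_⟩
    rw [← h, Algebra.smul_def, Algebra.smul_def]
    simp
  have : Nontrivial (K ≃ₐ[ℚ] K) := by
    rw [← Finite.one_lt_card_iff_nontrivial, hcard]; norm_num
  obtain ⟨τ, hτ⟩ := exists_ne (1 : K ≃ₐ[ℚ] K)
  have hτω : τ (ω : K) = -(ω : K) := by
    have h1 : τ (ω : K) ^ 2 = (ω : K) ^ 2 := by
      rw [← map_pow, hω]; simp
    rcases sq_eq_sq_iff_eq_or_eq_neg.mp h1 with h | h
    · exfalso
      apply hτ
      ext x
      obtain ⟨u, v, rfl⟩ := hspan x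
      simp [h]
    · exact h
  have hnorm : ∀ x : K, x * τ x = algebraMap ℚ K (Algebra.norm ℚ x) := by
    intro x
    rw [Algebra.norm_eq_prod_automorphisms]
    classical
    have : (Finset.univ : Finset (K ≃ₐ[ℚ] K)) = {1, τ} := by
      symm
      apply Finset.eq_univ_of_card
      rw [Finset.card_pair (Ne.symm hτ), ← Nat.card_eq_fintype_card, hcard]
    rw [this, Finset.prod_pair (Ne.symm hτ)]
    simp
  refine ⟨RingOfIntegers.mapRingEquiv τ, ?_, ?_, ?_, ?_, ?_⟩
  · rw [RingOfIntegers.rank, hdeg]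
  · apply RingOfIntegers.ext
    push_cast
    simpa [sq] using hω
  · apply RingOfIntegers.ext
    simpa using hτω
  · intro x
    apply RingOfIntegers.ext
    have := hnorm (x : K)
    have h2 := Algebra.coe_norm_int x
    simp [this, ← h2]
  · intro x
    obtain ⟨u, v, h⟩ := hspan (x : K)
    refine ⟨u.den * v.den, by have := u.den_pos; have := v.den_pos; positivity,
      u.num * v.den, v.num * u.den, ?_⟩
    apply RingOfIntegers.ext
    push_cast
    change (u.den : K) * v.den * (x : K) =
      u.num * v.den + v.num * u.den * (ω : K)
    rw [h]
    have h1 : (u : K) * u.den = u.num := by exact_mod_cast Rat.mul_den_eq_num u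
    have h2 : (v : K) * v.den = v.num := by exact_mod_cast Rat.mul_den_eq_num v
    linear_combination (v.den : K) * h1 + (u.den : K) * ω * h2

namespace QD
variable {n : ℕ} {K : Type} [Field K] [NumberField K] {ω : 𝓞 K} {σ : 𝓞 K ≃+* 𝓞 K}

lemma ss (h : QD n ω σ) (x : 𝓞 K) : σ (σ x) = x := by
  have h1 := h.norm x
  have h2 := congrArg σ h1
  rw [map_mul, map_intCast, ← h1] at h2
  by_cases hx : x = 0
  · simp [hx]
  · have : σ x ≠ 0 := by simpa using hx
    apply mul_left_cancel₀ this
    rw [h2, mul_comm]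

lemma rep_norm (h : QD n ω σ) (x : 𝓞 K) : ∃ s : ℕ, 0 < s ∧ ∃ u v : ℤ,
    (s : ℤ) ^ 2 * Algebra.norm ℤ x = u ^ 2 + n * v ^ 2 := by
  obtain ⟨s, hs, u, v, e⟩ := h.rep x
  refine ⟨s, hs, u, v, ?_⟩
  have h1 := h.norm x
  have e2 := congrArg σ e
  simp only [map_mul, map_add, map_natCast, map_intCast, h.sw] at e2
  have : (((s : ℤ) ^ 2 * Algebra.norm ℤ x : ℤ) : 𝓞 K) = ((u ^ 2 + n * v ^ 2 : ℤ) : 𝓞 K) := by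
    push_cast
    rw [← h1]
    have h3 := h.sq
    linear_combination e * (s * σ x) + (u + v * ω) * e2 - (v : 𝓞 K) ^ 2 * h3
  exact_mod_cast this

lemma norm_nonneg (h : QD n ω σ) (x : 𝓞 K) : 0 ≤ Algebra.norm ℤ x := by
  obtain ⟨s, hs, u, v, e⟩ := h.rep_norm x
  by_contra hc
  push Not at hc
  have : (0 : ℤ) < (s : ℤ) ^ 2 := by positivity
  have : (0 : ℤ) ≤ u ^ 2 + n * v ^ 2 := by positivity
  nlinarith

lemma norm_abs (h : QD n ω σ) (x : 𝓞 K) :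
    x * σ x = ((Ideal.absNorm (Ideal.span {x}) : ℕ) : 𝓞 K) := by
  rw [h.norm, Ideal.absNorm_span_singleton]
  have := h.norm_nonneg x
  have h2 : ((Algebra.norm ℤ x).natAbs : ℤ) = Algebra.norm ℤ x := by omega
  rw [← Int.cast_natCast, h2]

lemma mul_conj (h : QD n ω σ) (I : Ideal (𝓞 K)) :
    I * I.map σ = Ideal.span {((Ideal.absNorm I : ℕ) : 𝓞 K)} := by
  by_cases hI : I = ⊥
  · simp [hI]
  have hI0 : I ∈ (Ideal (𝓞 K))⁰ := mem_nonZeroDivisors_of_ne_zero hI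
  set m := Fintype.card (ClassGroup (𝓞 K)) with hm
  have hm0 : m ≠ 0 := Fintype.card_ne_zero
  have h1 : (ClassGroup.mk0 ⟨I, hI0⟩) ^ m = 1 := pow_card_eq_one
  rw [← map_pow] at h1
  have h2 := (ClassGroup.mk0_eq_one_iff (I := I ^ m) (pow_mem hI0 m)).mp h1
  obtain ⟨x, hx⟩ := h2.principal
  have hx' : I ^ m = Ideal.span {x} := hx
  have key : (I * I.map σ) ^ m = (Ideal.span {((Ideal.absNorm I : ℕ) : 𝓞 K)}) ^ m := by
    rw [mul_pow, ← Ideal.map_pow, hx', Ideal.map_span, Set.image_singleton,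
      Ideal.span_singleton_mul_span_singleton, Ideal.span_singleton_pow]
    have := h.norm_abs x
    erw [this]
    rw [← hx', map_pow]
    push_cast
    rfl
  apply dvd_antisymm
  · exact (UniqueFactorizationMonoid.pow_dvd_pow_iff_dvd hm0).mp (dvd_of_eq key)
  · exact (UniqueFactorizationMonoid.pow_dvd_pow_iff_dvd hm0).mp (dvd_of_eq key.symm)

lemma absNorm_of_mul_conj (h : QD n ω σ) {I : Ideal (𝓞 K)} {q : ℕ}
    (hI : I * I.map σ = Ideal.span {(q : 𝓞 K)}) : Ideal.absNorm I = q := by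
  rw [h.mul_conj I] at hI
  have := congrArg Ideal.absNorm hI
  rw [Ideal.absNorm_span_natCast, Ideal.absNorm_span_natCast, h.fr] at this
  exact Nat.pow_left_injective (by norm_num) this

lemma absNorm_of_sq (h : QD n ω σ) {I : Ideal (𝓞 K)} {q : ℕ}
    (hI : I * I = Ideal.span {(q : 𝓞 K)}) : Ideal.absNorm I = q := by
  have := congrArg Ideal.absNorm hI
  rw [Ideal.absNorm_span_natCast, h.fr, map_mul, ← pow_two] at this
  exact Nat.pow_left_injective (by norm_num) this

lemma map_map (h : QD n ω σ) (I : Ideal (𝓞 K)) : (I.map σ).map σ = I := by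
  ext x
  constructor
  · intro hx
    obtain ⟨y, hy, rfl⟩ := (Ideal.mem_map_of_equiv σ x).mp hx
    obtain ⟨z, hz, rfl⟩ := (Ideal.mem_map_of_equiv σ y).mp hy
    rwa [h.ss]
  · intro hx
    rw [← h.ss x]
    exact Ideal.mem_map_of_mem σ (Ideal.mem_map_of_mem σ hx)

end QD
lemma aLeg_zero_iff {a : ℤ} {p : ℕ} : aLeg a p = 0 ↔ IsSquare ((a : ZMod p)) := by
  unfold aLeg
  split_ifs with h <;> simp [h]

lemma aLeg_one_iff {a : ℤ} {p : ℕ} : aLeg a p = 1 ↔ ¬ IsSquare ((a : ZMod p)) := by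
  unfold aLeg
  split_ifs with h <;> simp [h]

lemma zmod2_cases (x : ZMod 2) : x = 0 ∨ x = 1 := by
  revert x; decide

lemma aLeg_eq_of {a b : ℤ} {p q : ℕ}
    (h : IsSquare ((a : ZMod p)) ↔ IsSquare ((b : ZMod q))) : aLeg a p = aLeg b q := by
  unfold aLeg
  by_cases h1 : IsSquare ((a : ZMod p))
  · rw [if_pos h1, if_pos (h.mp h1)]
  · rw [if_neg h1, if_neg (fun h2 => h1 (h.mpr h2))]

lemma aLeg_congr {a b : ℤ} {p : ℕ} (h : (a : ZMod p) = b) : aLeg a p = aLeg b p :=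
  aLeg_eq_of (by rw [h])

lemma legendre_aLeg {a : ℤ} {p : ℕ} [Fact p.Prime] (ha : ¬ (p : ℤ) ∣ a) :
    legendreSym p a = (-1) ^ (aLeg a p).val := by
  have ha0 : ((a : ZMod p)) ≠ 0 := by rwa [Ne, ZMod.intCast_zmod_eq_zero_iff_dvd]
  rcases zmod2_cases (aLeg a p) with h | h
  · rw [h, (legendreSym.eq_one_iff p ha0).mpr (aLeg_zero_iff.mp h)]; simp
  · rw [h, (legendreSym.eq_neg_one_iff p).mpr (aLeg_one_iff.mp h)]; simp [ZMod.val_one]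

lemma neg_one_pow_val_inj {x y : ZMod 2} (h : (-1 : ℤ) ^ x.val = (-1) ^ y.val) : x = y := by
  revert x y; decide

lemma neg_one_pow_val_add (x y : ZMod 2) :
    (-1 : ℤ) ^ (x + y).val = (-1) ^ x.val * (-1) ^ y.val := by
  revert x y; decide

lemma aLeg_mul {a b : ℤ} {p : ℕ} [hp : Fact p.Prime] (ha : ¬ (p : ℤ) ∣ a) (hb : ¬ (p : ℤ) ∣ b) :
    aLeg (a * b) p = aLeg a p + aLeg b p := by
  have hab : ¬ (p : ℤ) ∣ a * b := by
    intro h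
    rcases (Nat.prime_iff_prime_int.mp hp.out).dvd_or_dvd h with h | h
    · exact ha h
    · exact hb h
  apply neg_one_pow_val_inj
  rw [neg_one_pow_val_add, ← legendre_aLeg ha, ← legendre_aLeg hb, ← legendre_aLeg hab,
    legendreSym.mul]

/-- The (additive) norm residue symbol `(m, -n)_p` for `p ∣ n`, `p % 4 = 1`. -/
noncomputable def chi (n p m : ℕ) : ZMod 2 :=
  aLeg ((ordCompl[p] m : ℕ) : ℤ) p + (m.factorization p : ZMod 2) * aLeg ((n / p : ℕ) : ℤ) p

lemma chi_mul {n p : ℕ} [hp : Fact p.Prime] {a b : ℕ} (ha : a ≠ 0) (hb : b ≠ 0) :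
    chi n p (a * b) = chi n p a + chi n p b := by
  unfold chi
  have h1 := Nat.not_dvd_ordCompl hp.out ha
  have h2 := Nat.not_dvd_ordCompl hp.out hb
  rw [Nat.ordCompl_mul, Nat.factorization_mul ha hb, Nat.cast_mul,
    aLeg_mul (by exact_mod_cast h1) (by exact_mod_cast h2)]
  simp only [Finsupp.add_apply]
  push_cast
  ring

lemma chi_sq {n p : ℕ} [hp : Fact p.Prime] {a : ℕ} (ha : a ≠ 0) : chi n p (a ^ 2) = 0 := by
  rw [pow_two, chi_mul ha ha, CharTwo.add_self_eq_zero]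

lemma chi_coprime {n p m : ℕ} (h : ¬ p ∣ m) : chi n p m = aLeg (m : ℤ) p := by
  unfold chi
  rw [Nat.factorization_eq_zero_of_not_dvd h]
  simp

lemma chi_self {n p : ℕ} [hp : Fact p.Prime] : chi n p p = aLeg ((n / p : ℕ) : ℤ) p := by
  unfold chi
  have h1 : p.factorization p = 1 := hp.out.factorization_self
  have h2 : aLeg 1 p = 0 := aLeg_zero_iff.mpr (by simp)
  rw [h1]
  simp [Nat.div_self hp.out.pos, h2]

lemma chi_one {n p : ℕ} [hp : Fact p.Prime] : chi n p 1 = 0 := by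
  simpa using chi_sq (n := n) (p := p) (a := 1) one_ne_zero

lemma chi_form {n p : ℕ} [hp : Fact p.Prime] (hpn : p ∣ n) (hpn' : ¬ p ∣ n / p) :
    ∀ N : ℕ, ∀ m : ℕ, m ≤ N → m ≠ 0 → ∀ x y : ℤ, (m : ℤ) = x ^ 2 + n * y ^ 2 →
      chi n p m = 0 := by
  have hpp := hp.out
  have hpI := Nat.prime_iff_prime_int.mp hpp
  have hp0 : (p : ℤ) ≠ 0 := by exact_mod_cast hpp.ne_zero
  obtain ⟨e, he⟩ := hpn
  have hdiv : n / p = e := by rw [he, Nat.mul_div_cancel_left _ hpp.pos]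
  intro N
  induction N with
  | zero => intro m h1 h2; omega
  | succ N ih =>
    intro m hm hm0 x y hxy
    by_cases hx : (p : ℤ) ∣ x
    · obtain ⟨x1, rfl⟩ := hx
      have hm2 : (m : ℤ) = p * (p * x1 ^ 2 + e * y ^ 2) := by
        rw [hxy, he]; push_cast; ring
      have hpm : p ∣ m := by
        have : (p : ℤ) ∣ m := ⟨_, hm2⟩
        exact_mod_cast this
      obtain ⟨m1, rfl⟩ := hpm
      have hm10 : m1 ≠ 0 := by rintro rfl; simp at hm0
      have hm3 : (m1 : ℤ) = p * x1 ^ 2 + e * y ^ 2 := by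
        push_cast at hm2
        exact mul_left_cancel₀ hp0 hm2
      rw [chi_mul hpp.ne_zero hm10]
      by_cases hy : (p : ℤ) ∣ y
      · obtain ⟨y1, rfl⟩ := hy
        have hpm1 : (p : ℤ) ∣ m1 := ⟨x1 ^ 2 + n * y1 ^ 2, by rw [hm3, he]; push_cast; ring⟩
        have hpm1' : p ∣ m1 := by exact_mod_cast hpm1
        obtain ⟨m2, rfl⟩ := hpm1'
        have hm20 : m2 ≠ 0 := by rintro rfl; simp at hm10
        rw [chi_mul hpp.ne_zero hm20, ← add_assoc, CharTwo.add_self_eq_zero, zero_add]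
        apply ih m2 _ hm20 x1 y1
        · apply mul_left_cancel₀ hp0
          push_cast at hm3
          rw [hm3, he]; push_cast; ring
        · have h1 : 1 < p := hpp.one_lt
          have h2 : m2 < p * (p * m2) := by
            have : 0 < m2 := Nat.pos_of_ne_zero hm20
            calc m2 < p * m2 := by nlinarith
              _ ≤ p * (p * m2) := Nat.le_mul_of_pos_left _ hpp.pos
          omega
      · have he' : ¬ (p : ℤ) ∣ (e : ℤ) := by rw [← hdiv]; exact_mod_cast hpn'
        have hpm1 : ¬ p ∣ m1 := by
          intro hd
          have hd' : (p : ℤ) ∣ m1 := by exact_mod_cast hd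
          rw [hm3] at hd'
          have h3 : (p : ℤ) ∣ e * y ^ 2 := (dvd_add_right (Dvd.intro _ rfl)).mp hd'
          rcases hpI.dvd_or_dvd h3 with h | h
          · exact he' h
          · exact hy (hpI.dvd_of_dvd_pow h)
        rw [chi_self, chi_coprime hpm1, hdiv]
        have hcg : aLeg (m1 : ℤ) p = aLeg ((e : ℤ) * (y * y)) p := by
          apply aLeg_congr
          rw [hm3]; push_cast; rw [CharP.cast_eq_zero]; ring
        have hyy : ¬ (p : ℤ) ∣ y * y := by
          intro h; exact hy ((hpI.dvd_or_dvd h).elim id id)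
        rw [hcg, aLeg_mul he' hyy, aLeg_mul hy hy, CharTwo.add_self_eq_zero, add_zero,
          CharTwo.add_self_eq_zero]
    · have hpm : ¬ p ∣ m := by
        intro hd
        have hd' : (p : ℤ) ∣ m := by exact_mod_cast hd
        rw [hxy] at hd'
        have h1 : (p : ℤ) ∣ n * y ^ 2 := by rw [he]; push_cast; exact ⟨e * y ^ 2, by ring⟩
        exact hx (hpI.dvd_of_dvd_pow ((dvd_add_left h1).mp hd'))
      rw [chi_coprime hpm]
      have hcg : aLeg (m : ℤ) p = aLeg (x * x) p := by
        apply aLeg_congr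
        rw [hxy, he]; push_cast; rw [CharP.cast_eq_zero]; ring
      rw [hcg, aLeg_mul hx hx, CharTwo.add_self_eq_zero]

lemma QD.chi_norm {n : ℕ} {K : Type} [Field K] [NumberField K] {ω : 𝓞 K} {σ : 𝓞 K ≃+* 𝓞 K}
    (h : QD n ω σ) {p : ℕ} [hp : Fact p.Prime] (hpn : p ∣ n) (hpn' : ¬ p ∣ n / p)
    {x : 𝓞 K} (hx : x ≠ 0) : chi n p (Ideal.absNorm (Ideal.span {x})) = 0 := by
  obtain ⟨s, hs, u, v, e⟩ := h.rep_norm x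
  have h0 : Ideal.absNorm (Ideal.span {x}) ≠ 0 := by
    rw [Ne, Ideal.absNorm_eq_zero_iff, Ideal.span_singleton_eq_bot]; exact hx
  have hs0 : s ^ 2 ≠ 0 := by positivity
  have key : chi n p (s ^ 2 * Ideal.absNorm (Ideal.span {x})) = 0 := by
    apply chi_form hpn hpn' _ _ le_rfl (mul_ne_zero hs0 h0) u v
    rw [← e, Ideal.absNorm_span_singleton]
    have := h.norm_nonneg x
    have h2 : ((Algebra.norm ℤ x).natAbs : ℤ) = Algebra.norm ℤ x := by omega
    push_cast
    rw [abs_of_nonneg this]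
  rwa [chi_mul hs0 h0, chi_sq hs.ne', zero_add] at key

namespace QD
variable {n : ℕ} {K : Type} [Field K] [NumberField K] {ω : 𝓞 K} {σ : 𝓞 K ≃+* 𝓞 K}

lemma ram_sq (h : QD n ω σ) {p : ℕ} (hp : p.Prime) (hpn : p ∣ n) (hpn' : ¬ p ∣ n / p) :
    Ideal.span {(p : 𝓞 K), ω} * Ideal.span {(p : 𝓞 K), ω} = Ideal.span {(p : 𝓞 K)} := by
  obtain ⟨e, he⟩ := hpn
  have hdiv : n / p = e := by rw [he, Nat.mul_div_cancel_left _ hp.pos]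
  rw [hdiv] at hpn'
  have hsq := h.sq
  rw [he] at hsq
  push_cast at hsq
  have hcop : IsCoprime (p : ℤ) (e : ℤ) :=
    Nat.isCoprime_iff_coprime.mpr ((Nat.Prime.coprime_iff_not_dvd hp).mpr hpn')
  obtain ⟨x, y, hxy⟩ := hcop
  have hxy' : (x : 𝓞 K) * p + y * e = 1 := by exact_mod_cast congrArg (Int.cast : ℤ → 𝓞 K) hxy
  rw [Ideal.span_pair_mul_span_pair]
  apply le_antisymm
  · rw [Ideal.span_le]
    rintro z (rfl | rfl | rfl | rfl) <;> rw [SetLike.mem_coe, Ideal.mem_span_singleton]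
    · exact ⟨p, rfl⟩
    · exact ⟨ω, rfl⟩
    · exact ⟨ω, mul_comm _ _⟩
    · exact ⟨-e, by rw [hsq]; ring⟩
  · rw [Ideal.span_singleton_le_iff_mem]
    have e1 : (p : 𝓞 K) = x * (p * p) + (-y) * (ω * ω) := by
      rw [hsq]; linear_combination -(p : 𝓞 K) * hxy'
    have h1 : (p : 𝓞 K) * p ∈ Ideal.span {(p : 𝓞 K) * p, (p : 𝓞 K) * ω, ω * p, ω * ω} :=
      Ideal.subset_span (by simp)
    have h2 : ω * ω ∈ Ideal.span {(p : 𝓞 K) * p, (p : 𝓞 K) * ω, ω * p, ω * ω} :=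
      Ideal.subset_span (by simp)
    have h3 := Ideal.add_mem _ (Ideal.mul_mem_left _ (x : 𝓞 K) h1)
      (Ideal.mul_mem_left _ (-y : 𝓞 K) h2)
    rwa [← e1] at h3

lemma ram_two (h : QD n ω σ) (hn : n % 4 = 1) :
    Ideal.span {(2 : 𝓞 K), 1 + ω} * Ideal.span {(2 : 𝓞 K), 1 + ω} = Ideal.span {(2 : 𝓞 K)} := by
  have hsq := h.sq
  obtain ⟨e, he⟩ : ∃ e, n = 4 * e + 1 := ⟨n / 4, by omega⟩
  rw [he] at hsq
  push_cast at hsq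
  rw [Ideal.span_pair_mul_span_pair]
  apply le_antisymm
  · rw [Ideal.span_le]
    rintro z (rfl | rfl | rfl | rfl) <;> rw [SetLike.mem_coe, Ideal.mem_span_singleton]
    · exact ⟨2, rfl⟩
    · exact ⟨1 + ω, rfl⟩
    · exact ⟨1 + ω, mul_comm _ _⟩
    · exact ⟨ω - 2 * e, by linear_combination hsq⟩
  · rw [Ideal.span_singleton_le_iff_mem]
    have e1 : (2 : 𝓞 K) = (-e) * (2 * 2) + 1 * (2 * (1 + ω)) + (-1) * ((1 + ω) * (1 + ω)) := by
      linear_combination hsq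
    set J := Ideal.span {(2 : 𝓞 K) * 2, 2 * (1 + ω), (1 + ω) * 2, (1 + ω) * (1 + ω)} with hJ
    have h1 : (2 : 𝓞 K) * 2 ∈ J := Ideal.subset_span (by simp)
    have h2 : (2 : 𝓞 K) * (1 + ω) ∈ J := Ideal.subset_span (by simp)
    have h2' : (1 + ω) * (1 + ω) ∈ J := Ideal.subset_span (by simp)
    have h3 := Ideal.add_mem _ (Ideal.add_mem _ (Ideal.mul_mem_left _ (-e : 𝓞 K) h1)
      (Ideal.mul_mem_left _ (1 : 𝓞 K) h2)) (Ideal.mul_mem_left _ (-1 : 𝓞 K) h2')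
    rwa [← e1] at h3

/-- A proper ideal containing an ideal of prime norm equals it. -/
lemma eq_of_prime_norm {I P : Ideal (𝓞 K)} (hI : (Ideal.absNorm I).Prime) (hle : I ≤ P)
    (hP : P ≠ ⊤) : P = I := by
  have hpr : I.IsPrime := Ideal.isPrime_of_irreducible_absNorm hI
  have hb : I ≠ ⊥ := by
    rintro rfl
    rw [Ideal.absNorm_bot] at hI
    exact Nat.not_prime_zero hI
  have hm : I.IsMaximal := hpr.isMaximal hb
  exact (hm.eq_of_le hP hle).symm

/-- A conjugation-stable prime is inert (generated by a rational prime) or ramified. -/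
lemma stable_prime (h : QD n ω σ) {P : Ideal (𝓞 K)} (hP : P.IsPrime) (hb : P ≠ ⊥)
    (hs : P.map σ = P) :
    (∃ q : ℕ, P = Ideal.span {(q : 𝓞 K)}) ∨ (2 : 𝓞 K) ∈ P ∨
      (∃ q : ℕ, q.Prime ∧ q ∣ n ∧ (q : 𝓞 K) ∈ P ∧ ω ∈ P) := by
  have hmax : P.IsMaximal := hP.isMaximal hb
  obtain ⟨q, f, hq, hf⟩ : ∃ q f : ℕ, q.Prime ∧ Ideal.absNorm P = q ^ f := by
    obtain ⟨q, f, -, -, h1, h2⟩ := Ideal.exists_prime_and_absNorm_eq_pow P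
    exact ⟨q, f, h1, h2⟩
  have hqP : (q : 𝓞 K) ∈ P := by
    have := Ideal.absNorm_mem P
    rw [hf] at this
    push_cast at this
    exact hP.mem_of_pow_mem _ this
  have hle : Ideal.span {(q : 𝓞 K)} ≤ P := by rwa [Ideal.span_singleton_le_iff_mem]
  have hdv := Ideal.absNorm_dvd_absNorm_of_le hle
  have hf2 : f ≤ 2 := by
    rw [Ideal.absNorm_span_natCast, h.fr, hf] at hdv
    exact (Nat.pow_dvd_pow_iff_le_right hq.one_lt).mp hdv
  have hf0 : f ≠ 0 := by
    rintro rfl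
    rw [pow_zero, Ideal.absNorm_eq_one_iff] at hf
    exact hP.ne_top hf
  by_cases hf1 : f = 2
  · left
    refine ⟨q, ?_⟩
    obtain ⟨Q, hQ⟩ := Ideal.dvd_iff_le.mpr hle
    have h1 := congrArg Ideal.absNorm hQ
    rw [Ideal.absNorm_span_natCast, h.fr, map_mul, hf, hf1] at h1
    have h2 : Ideal.absNorm Q = 1 := by
      have : 0 < q ^ 2 := pow_pos hq.pos 2
      nlinarith
    rw [Ideal.absNorm_eq_one_iff] at h2
    rw [hQ, h2, Ideal.mul_top]
  · right
    have hf1 : f = 1 := by omega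
    rw [hf1, pow_one] at hf
    -- `ω` is congruent to a rational integer mod `P`
    have : ∃ t : ℤ, ω - t ∈ P := by
      have : Fact q.Prime := ⟨hq⟩
      have hcard : Nat.card (𝓞 K ⧸ P) = q := by
        rw [← hf, Ideal.absNorm_apply, Submodule.cardQuot_apply]
      have h1 : (1 : 𝓞 K ⧸ P) ≠ 0 := by
        have := Ideal.Quotient.nontrivial_iff.mpr hP.ne_top
        exact one_ne_zero
      obtain ⟨t, ht⟩ := mem_zmultiples_of_prime_card hcard (g' := Ideal.Quotient.mk P ω) h1
      refine ⟨t, ?_⟩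
      rw [← Ideal.Quotient.eq_zero_iff_mem, map_sub, ← ht]
      simp
    obtain ⟨t, ht⟩ := this
    have ht' : -ω - t ∈ P := by
      have := Ideal.mem_map_of_mem σ ht
      rw [hs] at this
      simpa [h.sw] using this
    have h2w : 2 * ω ∈ P := by
      have := Ideal.sub_mem _ ht ht'
      convert this using 1
      ring
    rcases hP.mem_or_mem h2w with h2 | hw
    · left; exact h2
    · right
      refine ⟨q, hq, ?_, hqP, hw⟩
      have hnP : (n : 𝓞 K) ∈ P := by
        have := Ideal.mul_mem_left P (-ω) hw
        convert this using 1
        linear_combination h.sq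
      by_contra hnd
      have hcop : IsCoprime (q : ℤ) (n : ℤ) :=
        Nat.isCoprime_iff_coprime.mpr ((Nat.Prime.coprime_iff_not_dvd hq).mpr hnd)
      obtain ⟨x, y, hxy⟩ := hcop
      have hxy' : (x : 𝓞 K) * q + y * n = 1 := by
        exact_mod_cast congrArg (Int.cast : ℤ → 𝓞 K) hxy
      apply hP.ne_top
      rw [Ideal.eq_top_iff_one, ← hxy']
      exact Ideal.add_mem _ (Ideal.mul_mem_left _ _ hqP) (Ideal.mul_mem_left _ _ hnP)

end QD
open Classical in
/-- The class of an ideal, with value `1` at the zero ideal. -/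
noncomputable def cl {K : Type} [Field K] [NumberField K] (I : Ideal (𝓞 K)) :
    ClassGroup (𝓞 K) :=
  if h : I ∈ (Ideal (𝓞 K))⁰ then ClassGroup.mk0 ⟨I, h⟩ else 1

section
variable {K : Type} [Field K] [NumberField K]

lemma cl_eq {I : Ideal (𝓞 K)} (h : I ∈ (Ideal (𝓞 K))⁰) : cl I = ClassGroup.mk0 ⟨I, h⟩ :=
  dif_pos h

lemma cl_mul {I J : Ideal (𝓞 K)} (hI : I ≠ ⊥) (hJ : J ≠ ⊥) : cl (I * J) = cl I * cl J := by
  have hI' : I ∈ (Ideal (𝓞 K))⁰ := mem_nonZeroDivisors_of_ne_zero hI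
  have hJ' : J ∈ (Ideal (𝓞 K))⁰ := mem_nonZeroDivisors_of_ne_zero hJ
  rw [cl_eq hI', cl_eq hJ', cl_eq (mul_mem hI' hJ'), ← map_mul]
  rfl

lemma cl_span {x : 𝓞 K} : cl (Ideal.span {x}) = 1 := by
  by_cases h : Ideal.span {x} ∈ (Ideal (𝓞 K))⁰
  · rw [cl_eq h, ClassGroup.mk0_eq_one_iff]
    exact ⟨⟨x, rfl⟩⟩
  · exact dif_neg h

lemma cl_surj (t : ClassGroup (𝓞 K)) : ∃ I : Ideal (𝓞 K), I ≠ ⊥ ∧ cl I = t := by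
  obtain ⟨⟨I, hI⟩, rfl⟩ := ClassGroup.mk0_surjective t
  exact ⟨I, nonZeroDivisors.ne_zero hI, cl_eq hI⟩

lemma cl_one_exists {I : Ideal (𝓞 K)} (hI : I ≠ ⊥) (h : cl I = 1) :
    ∃ x : 𝓞 K, x ≠ 0 ∧ I = Ideal.span {x} := by
  have hI' : I ∈ (Ideal (𝓞 K))⁰ := mem_nonZeroDivisors_of_ne_zero hI
  rw [cl_eq hI', ClassGroup.mk0_eq_one_iff] at h
  obtain ⟨x, hx⟩ := h.principal
  have hx' : I = Ideal.span {x} := hx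
  refine ⟨x, ?_, hx'⟩
  rintro rfl
  apply hI
  rw [hx', Ideal.span_singleton_eq_bot]

end

namespace QD
variable {n : ℕ} {K : Type} [Field K] [NumberField K] {ω : 𝓞 K} {σ : 𝓞 K ≃+* 𝓞 K}

lemma ambiguous (h : QD n ω σ) (H : Subgroup (ClassGroup (𝓞 K)))
    (hH : ∀ P : Ideal (𝓞 K), P.IsPrime → P ≠ ⊥ → ((2 : 𝓞 K) ∈ P ∨
      (∃ q : ℕ, q.Prime ∧ q ∣ n ∧ (q : 𝓞 K) ∈ P ∧ ω ∈ P)) → cl P ∈ H) :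
    ∀ N : ℕ, ∀ J : Ideal (𝓞 K), Ideal.absNorm J ≤ N → J ≠ ⊥ → J.map σ = J → cl J ∈ H := by
  intro N
  induction N with
  | zero =>
    intro J h1 h2
    exact absurd (Ideal.absNorm_eq_zero_iff.mp (Nat.le_zero.mp h1)) h2
  | succ N ih =>
    intro J hJN hJ hJs
    by_cases htop : J = ⊤
    · rw [htop, ← Ideal.span_singleton_one, cl_span]; exact H.one_mem
    obtain ⟨P, hPm, hPJ⟩ := Ideal.exists_le_maximal J htop
    have hP : P.IsPrime := hPm.isPrime
    have hPb : P ≠ ⊥ := by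
      rintro rfl
      exact hJ (le_bot_iff.mp hPJ)
    have hPn1 : Ideal.absNorm P ≠ 1 := by
      rw [Ne, Ideal.absNorm_eq_one_iff]; exact hP.ne_top
    have hPn0 : Ideal.absNorm P ≠ 0 := by
      rw [Ne, Ideal.absNorm_eq_zero_iff]; exact hPb
    have step : ∀ Q : Ideal (𝓞 K), Q ∣ J → 1 < Ideal.absNorm Q → Q.map σ = Q → cl Q ∈ H →
        cl J ∈ H := by
      rintro Q ⟨J', rfl⟩ hQ1 hQs hQ
      have hQ0 : Q ≠ ⊥ := by rintro rfl; simp at hQ1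
      have hJ0 : J' ≠ ⊥ := by rintro rfl; simp at hJ
      rw [cl_mul hQ0 hJ0]
      refine H.mul_mem hQ (ih J' ?_ hJ0 ?_)
      · rw [map_mul] at hJN
        have : Ideal.absNorm J' ≠ 0 := by rw [Ne, Ideal.absNorm_eq_zero_iff]; exact hJ0
        have : 0 < Ideal.absNorm J' := by omega
        nlinarith
      · rw [Ideal.map_mul, hQs] at hJs
        exact mul_left_cancel₀ hQ0 hJs
    by_cases hPs : P.map σ = P
    · apply step P (Ideal.dvd_iff_le.mpr hPJ) (by omega) hPs
      rcases h.stable_prime hP hPb hPs with ⟨q, hq⟩ | h2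
      · rw [hq, cl_span]; exact H.one_mem
      · exact hH P hP hPb h2
    · have hPJ' : J ≤ P.map σ := by rw [← hJs]; exact Ideal.map_mono hPJ
      have hm' : (P.map σ).IsMaximal := Ideal.map_isMaximal_of_equiv σ
      have hcop : IsCoprime P (P.map σ) := by
        rw [Ideal.isCoprime_iff_sup_eq]
        exact hPm.coprime_of_ne hm' (Ne.symm hPs)
      apply step (P * P.map σ) (hcop.mul_dvd (Ideal.dvd_iff_le.mpr hPJ) (Ideal.dvd_iff_le.mpr hPJ'))
      · rw [h.mul_conj, Ideal.absNorm_span_natCast, h.fr]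
        have : 1 < Ideal.absNorm P := by omega
        nlinarith
      · rw [Ideal.map_mul, h.map_map, mul_comm]
      · rw [h.mul_conj, cl_span]; exact H.one_mem

lemma two_torsion (h : QD n ω σ) (H : Subgroup (ClassGroup (𝓞 K)))
    (hH : ∀ P : Ideal (𝓞 K), P.IsPrime → P ≠ ⊥ → ((2 : 𝓞 K) ∈ P ∨
      (∃ q : ℕ, q.Prime ∧ q ∣ n ∧ (q : 𝓞 K) ∈ P ∧ ω ∈ P)) → cl P ∈ H)
    (t : ClassGroup (𝓞 K)) (ht : t ^ 2 = 1) : t ∈ H := by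
  obtain ⟨I, hI, rfl⟩ := cl_surj t
  rw [pow_two, ← cl_mul hI hI] at ht
  have hII : I * I ≠ ⊥ := mul_ne_zero hI hI
  obtain ⟨β, hβ0, hβ⟩ := cl_one_exists hII ht
  set m := Ideal.absNorm I with hm
  have hm0 : (m : 𝓞 K) ≠ 0 := by
    have : m ≠ 0 := by rw [hm, Ne, Ideal.absNorm_eq_zero_iff]; exact hI
    exact_mod_cast this
  have hconj : I * I.map σ = Ideal.span {(m : 𝓞 K)} := h.mul_conj I
  have hββ : β * σ β = m * m := by
    rw [h.norm_abs, ← hβ, map_mul]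
    push_cast
    rfl
  by_cases hγ : (m : 𝓞 K) + β = 0
  · apply h.ambiguous H hH _ I le_rfl hI
    apply mul_left_cancel₀ hI
    rw [hconj, hβ]
    have : β = -(m : 𝓞 K) := by linear_combination hγ
    rw [this, Ideal.span_singleton_neg]
  · set γ := (m : 𝓞 K) + β with hγd
    have hσγ : σ γ ≠ 0 := by simpa using hγ
    have hS : Ideal.span {σ γ} ≠ ⊥ := by simpa [Ideal.span_singleton_eq_bot] using hγ
    have hJ : I * Ideal.span {σ γ} ≠ ⊥ := mul_ne_zero hI hS
    have hcl : cl I = cl (I * Ideal.span {σ γ}) := by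
      rw [cl_mul hI hS, cl_span, mul_one]
    rw [hcl]
    apply h.ambiguous H hH _ _ le_rfl hJ
    apply mul_left_cancel₀ hI
    rw [Ideal.map_mul, ← mul_assoc, hconj, ← mul_assoc, hβ, Ideal.map_span, Set.image_singleton,
      Ideal.span_singleton_mul_span_singleton, Ideal.span_singleton_mul_span_singleton]
    have e : β * σ γ = m * σ (σ γ) := by
      rw [h.ss, hγd, map_add, map_natCast]
      linear_combination hββ
    rw [e]

end QD
lemma group_count {A M W : Type*} [CommGroup A] [Finite A] [CommGroup M] [Finite M]
    [CommGroup W] [Finite W] (G : A →* M) (hG : Function.Surjective G)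
    (hM : ∀ m : M, m ^ 2 = 1) (Φ : W →* A) (hW : Nat.card W = 2 * Nat.card M)
    (hΦ : ∃ w, w ≠ 1 ∧ Φ w = 1) (ht : ∀ a : A, a ^ 2 = 1 → a ∈ Φ.range)
    (a : A) (ha : G a = 1) : ∃ s, a = s ^ 2 := by
  set S : A →* A := powMonoidHom 2 with hS
  have hle : S.range ≤ G.ker := by
    rintro _ ⟨b, rfl⟩
    rw [MonoidHom.mem_ker, hS, powMonoidHom_apply, map_pow, hM]
  have c1 : Nat.card G.ker * Nat.card M = Nat.card A := by
    have h1 := G.ker.card_mul_index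
    rw [Subgroup.index_ker, MonoidHom.range_eq_top.mpr hG, Subgroup.card_top] at h1
    exact h1
  have c2 : Nat.card S.ker * Nat.card S.range = Nat.card A := by
    have h1 := S.ker.card_mul_index
    rwa [Subgroup.index_ker] at h1
  have c3 : Nat.card Φ.ker * Nat.card Φ.range = Nat.card W := by
    have h1 := Φ.ker.card_mul_index
    rwa [Subgroup.index_ker] at h1
  have c4 : 2 ≤ Nat.card Φ.ker := by
    obtain ⟨w, hw, hw'⟩ := hΦ
    have : Nontrivial Φ.ker := ⟨⟨⟨w, hw'⟩, 1, fun h => hw (congrArg Subtype.val h)⟩⟩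
    exact Finite.one_lt_card_iff_nontrivial.mpr this
  have c5 : Nat.card S.ker ≤ Nat.card Φ.range :=
    Subgroup.card_le_of_le (fun x hx => ht x hx)
  have pM : 0 < Nat.card M := Nat.card_pos
  have pS : 0 < Nat.card S.range := Nat.card_pos
  have pR : 0 < Nat.card Φ.range := Nat.card_pos
  have c6 : Nat.card Φ.range ≤ Nat.card M := by
    rw [hW] at c3
    nlinarith
  have c7 : Nat.card G.ker ≤ Nat.card S.range := by
    by_contra hc
    push Not at hc
    have : Nat.card S.ker * Nat.card S.range ≤ Nat.card M * Nat.card S.range :=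
      Nat.mul_le_mul_right _ (c5.trans c6)
    nlinarith
  have heq : S.range = G.ker := Subgroup.eq_of_le_of_card_ge hle c7
  have : a ∈ S.range := by rw [heq]; exact ha
  obtain ⟨s, hs⟩ := this
  exact ⟨s, by rw [← hs]; rfl⟩

lemma exists_phi {A ι : Type*} [CommGroup A] [Fintype ι] (g : ι → A) (hg : ∀ j, g j ^ 2 = 1) :
    ∃ Φ : Multiplicative (ι → ZMod 2) →* A,
      ∀ Y, Φ (Multiplicative.ofAdd Y) = ∏ j, g j ^ (Y j).val := by
  have key : ∀ (a : A), a ^ 2 = 1 → ∀ x y : ZMod 2, a ^ (x + y).val = a ^ x.val * a ^ y.val := by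
    intro a ha x y
    rcases zmod2_cases x with rfl | rfl <;> rcases zmod2_cases y with rfl | rfl
    · simp
    · simp
    · simp
    · have h1 : (1 + 1 : ZMod 2) = 0 := by decide
      rw [h1, ZMod.val_one, ZMod.val_zero, ← pow_add, ha, pow_zero]
  refine ⟨MonoidHom.mk' (fun Y => ∏ j, g j ^ ((Multiplicative.toAdd Y) j).val) ?_, ?_⟩
  · intro a b
    rw [← Finset.prod_mul_distrib]
    refine Finset.prod_congr rfl fun j _ => ?_
    rw [toAdd_mul, Pi.add_apply, key _ (hg j)]
  · intro Y
    rfl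

lemma QD.exists_genus {n k : ℕ} {K : Type} [Field K] [NumberField K] {ω : 𝓞 K}
    {σ : 𝓞 K ≃+* 𝓞 K} (h : QD n ω σ) (p : Fin k → ℕ) (hp : ∀ i, (p i).Prime)
    (hpn : ∀ i, p i ∣ n) (hpn' : ∀ i, ¬ p i ∣ n / p i) :
    ∃ G : ClassGroup (𝓞 K) →* Multiplicative (Fin k → ZMod 2),
      ∀ I : Ideal (𝓞 K), I ≠ ⊥ →
        G (cl I) = Multiplicative.ofAdd (fun i => chi n (p i) (Ideal.absNorm I)) := by
  have hn0 : ∀ {I : Ideal (𝓞 K)}, I ≠ ⊥ → Ideal.absNorm I ≠ 0 := by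
    intro I hI; rwa [Ne, Ideal.absNorm_eq_zero_iff]
  have wd : ∀ I J : Ideal (𝓞 K), I ≠ ⊥ → J ≠ ⊥ → cl I = cl J → ∀ i,
      chi n (p i) (Ideal.absNorm I) = chi n (p i) (Ideal.absNorm J) := by
    intro I J hI hJ hIJ i
    have : Fact (p i).Prime := ⟨hp i⟩
    have hI' : I ∈ (Ideal (𝓞 K))⁰ := mem_nonZeroDivisors_of_ne_zero hI
    have hJ' : J ∈ (Ideal (𝓞 K))⁰ := mem_nonZeroDivisors_of_ne_zero hJ
    rw [cl_eq hI', cl_eq hJ', ClassGroup.mk0_eq_mk0_iff] at hIJ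
    obtain ⟨x, y, hx, hy, e⟩ := hIJ
    have e2 := congrArg (fun L => chi n (p i) (Ideal.absNorm L)) e
    simp only [map_mul] at e2
    have hx' : Ideal.span {x} ≠ ⊥ := by rwa [Ne, Ideal.span_singleton_eq_bot]
    have hy' : Ideal.span {y} ≠ ⊥ := by rwa [Ne, Ideal.span_singleton_eq_bot]
    rwa [chi_mul (hn0 hx') (hn0 hI), chi_mul (hn0 hy') (hn0 hJ),
      h.chi_norm (hpn i) (hpn' i) hx, h.chi_norm (hpn i) (hpn' i) hy, zero_add, zero_add] at e2
  choose rp hrp0 hrp using cl_surj (K := K)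
  refine ⟨MonoidHom.mk' (fun t => Multiplicative.ofAdd
    (fun i => chi n (p i) (Ideal.absNorm (rp t)))) ?_, ?_⟩
  · intro s t
    rw [← ofAdd_add]
    congr 1
    funext i
    have : Fact (p i).Prime := ⟨hp i⟩
    rw [Pi.add_apply, ← chi_mul (hn0 (hrp0 s)) (hn0 (hrp0 t)), ← map_mul]
    apply wd _ _ (hrp0 _) (mul_ne_zero (hrp0 _) (hrp0 _))
    rw [cl_mul (hrp0 _) (hrp0 _), hrp, hrp, hrp]
  · intro I hI
    change Multiplicative.ofAdd _ = _
    congr 1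
    funext i
    exact wd _ _ (hrp0 _) hI (hrp _) i

lemma exists_prime_symbols {n k : ℕ} (p : Fin k → ℕ) (hp : ∀ i, (p i).Prime)
    (hinj : Function.Injective p) (hn : n = ∏ i, p i) (hp4 : ∀ i, p i % 4 = 1)
    (v : Fin k → ZMod 2) :
    ∃ q : ℕ, q.Prime ∧ q ≠ 2 ∧ (∀ i, ¬ p i ∣ q ∧ aLeg (q : ℤ) (p i) = v i) ∧
      IsSquare ((-(n : ℤ) : ℤ) : ZMod q) ∧ ¬ q ∣ n := by
  have hres : ∀ i, ∃ a : ℕ, ¬ p i ∣ a ∧ aLeg (a : ℤ) (p i) = v i := by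
    intro i
    have : Fact (p i).Prime := ⟨hp i⟩
    rcases zmod2_cases (v i) with h | h
    · refine ⟨1, ?_, ?_⟩
      · exact (hp i).one_lt.not_ge ∘ Nat.le_of_dvd one_pos
      · rw [h, aLeg_zero_iff]; simp
    · have h2 : ringChar (ZMod (p i)) ≠ 2 := by
        rw [ZMod.ringChar_zmod_n]
        have := hp4 i
        omega
      obtain ⟨x, hx⟩ := FiniteField.exists_nonsquare h2
      refine ⟨x.val, ?_, ?_⟩
      · intro hd
        have : x = 0 := by
          rw [← ZMod.natCast_zmod_val x]
          exact (ZMod.natCast_eq_zero_iff _ _).mpr hd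
        rw [this] at hx
        exact hx (by simp)
      · rw [h, aLeg_one_iff]
        simpa using hx
  choose a ha1 ha2 using hres
  have hcop : Set.Pairwise (↑(Finset.univ : Finset (Fin k))) (Function.onFun Nat.Coprime p) := by
    intro i _ j _ hij
    exact (Nat.coprime_primes (hp i) (hp j)).mpr (fun e => hij (hinj e))
  obtain ⟨x, hx⟩ := Nat.chineseRemainderOfFinset a p Finset.univ
    (fun i _ => (hp i).ne_zero) hcop
  obtain ⟨ε, hε, hε'⟩ : ∃ ε : ℕ, (ε = 1 ∨ ε = 3) ∧ ZMod.χ₄ (ε : ℕ) = (-1) ^ (∑ i, v i).val := by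
    rcases zmod2_cases (∑ i, v i) with h | h
    · exact ⟨1, Or.inl rfl, by rw [h]; decide⟩
    · exact ⟨3, Or.inr rfl, by rw [h]; decide⟩
  have hn4 : n.Coprime 4 := by
    rw [hn]
    apply Nat.Coprime.prod_left
    intro i _
    have h3 : Nat.Coprime (p i) 2 := by
      rw [Nat.coprime_primes (hp i) Nat.prime_two]
      have := hp4 i
      omega
    exact Nat.Coprime.pow_right 2 h3
  obtain ⟨u, hu1, hu2⟩ := Nat.chineseRemainder hn4 x ε
  have hpn : ∀ i, p i ∣ n := fun i => hn ▸ Finset.dvd_prod_of_mem p (Finset.mem_univ i)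
  have hup : ∀ i, u ≡ a i [MOD p i] := fun i =>
    (hu1.of_dvd (hpn i)).trans (hx i (Finset.mem_univ i))
  have hn0 : n ≠ 0 := by rw [hn]; exact Finset.prod_ne_zero_iff.mpr (fun i _ => (hp i).ne_zero)
  have hucop : u.Coprime (n * 4) := by
    apply Nat.Coprime.mul_right
    · rw [hn]
      apply Nat.Coprime.prod_right
      intro i _
      apply Nat.Coprime.symm
      rw [Nat.Prime.coprime_iff_not_dvd (hp i)]
      intro hd
      exact ha1 i (((hup i).dvd_iff dvd_rfl).mp hd)
    · have : u % 4 = ε % 4 := hu2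
      have h2 : Nat.Coprime u 2 := by
        rw [Nat.coprime_two_right]
        rcases hε with rfl | rfl <;> (rw [Nat.odd_iff]; omega)
      exact Nat.Coprime.pow_right 2 h2
  obtain ⟨q, hqn, hq, hqu⟩ := Nat.forall_exists_prime_gt_and_modEq (n + 2)
    (mul_ne_zero hn0 four_ne_zero) hucop
  have hqp : ∀ i, q ≡ a i [MOD p i] := fun i =>
    (hqu.of_dvd ((hpn i).mul_right 4)).trans (hup i)
  have hq1 : ∀ i, ¬ p i ∣ q := fun i hd => ha1 i (((hqp i).dvd_iff dvd_rfl).mp hd)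
  have hq2 : ∀ i, aLeg (q : ℤ) (p i) = v i := by
    intro i
    rw [← ha2 i]
    apply aLeg_congr
    have := (ZMod.natCast_eq_natCast_iff _ _ _).mpr (hqp i)
    exact_mod_cast this
  have hqn' : ¬ q ∣ n := fun hd => by
    have := Nat.le_of_dvd (Nat.pos_of_ne_zero hn0) hd
    omega
  have hq2' : q ≠ 2 := by omega
  refine ⟨q, hq, hq2', fun i => ⟨hq1 i, hq2 i⟩, ?_, hqn'⟩
  have : Fact q.Prime := ⟨hq⟩
  have hne : ((-(n : ℤ) : ℤ) : ZMod q) ≠ 0 := by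
    rw [Ne, ZMod.intCast_zmod_eq_zero_iff_dvd, dvd_neg]
    exact_mod_cast hqn'
  rw [← legendreSym.eq_one_iff q hne]
  have e1 : (-(n : ℤ) : ℤ) = (-1) * ∏ i, (p i : ℤ) := by rw [hn]; push_cast; ring
  have e2 : legendreSym q (∏ i, (p i : ℤ)) = ∏ i, legendreSym q (p i : ℤ) :=
    map_prod (legendreSym.hom q) _ _
  have e3 : ∀ i, legendreSym q (p i : ℤ) = (-1) ^ (v i).val := by
    intro i
    have : Fact (p i).Prime := ⟨hp i⟩
    rw [legendreSym.quadratic_reciprocity_one_mod_four (hp4 i) hq2', ← hq2 i]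
    apply legendre_aLeg
    exact_mod_cast hq1 i
  have e4 : ∀ s : Finset (Fin k), ∏ i ∈ s, (-1 : ℤ) ^ (v i).val = (-1) ^ (∑ i ∈ s, v i).val := by
    intro s
    induction s using Finset.induction_on with
    | empty => simp
    | insert i s hi ih =>
      rw [Finset.prod_insert hi, Finset.sum_insert hi, neg_one_pow_val_add, ih]
  have e5 : legendreSym q (-1) = (-1) ^ (∑ i, v i).val := by
    rw [legendreSym.at_neg_one hq2', ← hε']
    congr 1
    have h4 : q ≡ ε [MOD 4] := (hqu.of_dvd (Dvd.intro_left n rfl)).trans hu2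
    exact (ZMod.natCast_eq_natCast_iff _ _ _).mpr h4
  rw [e1, legendreSym.mul, e2, Finset.prod_congr rfl (fun i _ => e3 i), e4, e5, ← pow_add,
    ← two_mul, pow_mul]
  simp

lemma QD.split_norm {n : ℕ} {K : Type} [Field K] [NumberField K] {ω : 𝓞 K}
    {σ : 𝓞 K ≃+* 𝓞 K} (h : QD n ω σ) {q : ℕ} (hq : q.Prime) (hq2 : q ≠ 2) (hqn : ¬ q ∣ n)
    (hsq : IsSquare ((-(n : ℤ) : ℤ) : ZMod q)) :
    ∃ I : Ideal (𝓞 K), Ideal.absNorm I = q := by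
  have : Fact q.Prime := ⟨hq⟩
  have hqI := Nat.prime_iff_prime_int.mp hq
  obtain ⟨y, hy⟩ := hsq
  obtain ⟨s, hs⟩ : ∃ s : ℤ, (s : ZMod q) = y := ⟨y.val, by simp⟩
  rw [← hs] at hy
  have hd : (q : ℤ) ∣ s * s + n := by
    rw [← ZMod.intCast_zmod_eq_zero_iff_dvd]
    push_cast at hy ⊢
    rw [← hy]; ring
  obtain ⟨e, he⟩ := hd
  have hs0 : ¬ (q : ℤ) ∣ 2 * s := by
    intro hd
    rcases hqI.dvd_or_dvd hd with h2 | h2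
    · have : q ∣ 2 := by exact_mod_cast h2
      exact hq2 ((Nat.prime_dvd_prime_iff_eq hq Nat.prime_two).mp this)
    · apply hqn
      have : (q : ℤ) ∣ n := by
        have h3 : (q : ℤ) ∣ s * s + n := ⟨e, he⟩
        exact (dvd_add_right (h2.mul_right s)).mp h3
      exact_mod_cast this
  obtain ⟨x, y, hxy⟩ := (Prime.coprime_iff_not_dvd hqI).mpr hs0
  have hxy' : (x : 𝓞 K) * q + y * (2 * s) = 1 := by
    exact_mod_cast congrArg (Int.cast : ℤ → 𝓞 K) hxy
  have he' : (s : 𝓞 K) * s + n = q * e := by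
    exact_mod_cast congrArg (Int.cast : ℤ → 𝓞 K) he
  refine ⟨Ideal.span {(q : 𝓞 K), ω - s}, ?_⟩
  apply h.absNorm_of_mul_conj
  rw [Ideal.map_span, Set.image_pair, map_natCast, map_sub, h.sw, map_intCast,
    Ideal.span_pair_mul_span_pair]
  have hw := h.sq
  apply le_antisymm
  · rw [Ideal.span_le]
    rintro z (rfl | rfl | rfl | rfl) <;> rw [SetLike.mem_coe, Ideal.mem_span_singleton]
    · exact ⟨q, rfl⟩
    · exact ⟨_, rfl⟩
    · exact ⟨_, mul_comm _ _⟩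
    · exact ⟨e, by linear_combination he' - hw⟩
  · rw [Ideal.span_singleton_le_iff_mem]
    set J := Ideal.span {(q : 𝓞 K) * q, q * (-ω - s), (ω - s) * q, (ω - s) * (-ω - s)} with hJ
    have h1 : (q : 𝓞 K) * q ∈ J := Ideal.subset_span (by simp)
    have h2 : (q : 𝓞 K) * (-ω - s) ∈ J := Ideal.subset_span (by simp)
    have h3 : (ω - s) * q ∈ J := Ideal.subset_span (by simp)
    have h4 := Ideal.add_mem _ (Ideal.add_mem _ (Ideal.mul_mem_left _ (x : 𝓞 K) h1)
      (Ideal.mul_mem_left _ (-y : 𝓞 K) h2)) (Ideal.mul_mem_left _ (-y : 𝓞 K) h3)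
    convert h4 using 1
    linear_combination -(q : 𝓞 K) * hxy'

lemma prime_dvd_both {d e s a b c q : ℕ} (hq : q.Prime) (hsf : Squarefree (d * e)) (hqd : q ∣ d)
    (hqc : q ∣ c) (heq : s * c ^ 2 = d * a ^ 2 + e * b ^ 2) : q ∣ a ∧ q ∣ b := by
  obtain ⟨d1, rfl⟩ := hqd
  obtain ⟨c1, rfl⟩ := hqc
  have hno : ∀ x, ¬ (q * d1 * e = q * q * x) := by
    intro x hx
    exact hq.one_lt.ne' (Nat.isUnit_iff.mp (hsf q ⟨x, hx⟩))
  have hqe : ¬ q ∣ e := by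
    rintro ⟨e1, rfl⟩; exact hno (d1 * e1) (by ring)
  have hqd1 : ¬ q ∣ d1 := by
    rintro ⟨e1, rfl⟩; exact hno (e1 * e) (by ring)
  have h1 : q ∣ e * b ^ 2 := by
    have : q ∣ q * d1 * a ^ 2 + e * b ^ 2 := by rw [← heq]; exact ⟨s * q * c1 ^ 2, by ring⟩
    exact (Nat.dvd_add_right ⟨d1 * a ^ 2, by ring⟩).mp this
  have hb : q ∣ b := hq.dvd_of_dvd_pow ((hq.dvd_mul.mp h1).resolve_left hqe)
  refine ⟨?_, hb⟩
  obtain ⟨b1, rfl⟩ := hb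
  have h2 : q * (s * q * c1 ^ 2) = q * (d1 * a ^ 2 + q * (e * b1 ^ 2)) := by
    linear_combination heq
  have h3 := Nat.eq_of_mul_eq_mul_left hq.pos h2
  have h4 : q ∣ d1 * a ^ 2 := by
    have : q ∣ d1 * a ^ 2 + q * (e * b1 ^ 2) := by rw [← h3]; exact ⟨s * c1 ^ 2, by ring⟩
    exact (Nat.dvd_add_left ⟨_, rfl⟩).mp this
  exact hq.dvd_of_dvd_pow ((hq.dvd_mul.mp h4).resolve_left hqd1)

lemma not_common {a b c q : ℕ} (hq : q.Prime) (hprim : Nat.gcd a (Nat.gcd b c) = 1)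
    (ha : q ∣ a) (hb : q ∣ b) (hc : q ∣ c) : False := by
  have := Nat.dvd_gcd ha (Nat.dvd_gcd hb hc)
  rw [hprim] at this
  exact hq.one_lt.ne' (Nat.dvd_one.mp this)

lemma c_coprime {d e s a b c q : ℕ} (hq : q.Prime) (hsf : Squarefree (d * e)) (hqn : q ∣ d * e)
    (heq : s * c ^ 2 = d * a ^ 2 + e * b ^ 2) (hprim : Nat.gcd a (Nat.gcd b c) = 1) :
    ¬ q ∣ c := by
  intro hqc
  rcases hq.dvd_mul.mp hqn with h | h
  · obtain ⟨h1, h2⟩ := prime_dvd_both hq hsf h hqc heq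
    exact not_common hq hprim h1 h2 hqc
  · rw [mul_comm] at hsf
    rw [add_comm] at heq
    obtain ⟨h1, h2⟩ := prime_dvd_both hq hsf h hqc heq
    exact not_common hq hprim h2 h1 hqc

lemma c_odd {d e s a b c : ℕ} (hd : d % 4 = 1) (he : e % 4 = 1)
    (heq : s * c ^ 2 = d * a ^ 2 + e * b ^ 2) (hprim : Nat.gcd a (Nat.gcd b c) = 1) :
    ¬ 2 ∣ c := by
  rintro ⟨c1, rfl⟩
  have h0 : (d * a ^ 2 + e * b ^ 2) % 4 = 0 := by
    rw [← heq, show s * (2 * c1) ^ 2 = 4 * (s * c1 ^ 2) by ring]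
    exact Nat.mul_mod_right _ _
  have h1 : (a ^ 2 + b ^ 2) % 4 = 0 := by
    have e1 : (d * a ^ 2) % 4 = a ^ 2 % 4 := by rw [Nat.mul_mod, hd, one_mul, Nat.mod_mod]
    have e2 : (e * b ^ 2) % 4 = b ^ 2 % 4 := by rw [Nat.mul_mod, he, one_mul, Nat.mod_mod]
    omega
  have sqm : ∀ x : ℕ, (x % 2 = 0 ∧ x ^ 2 % 4 = 0) ∨ (x % 2 = 1 ∧ x ^ 2 % 4 = 1) := by
    intro x
    rcases Nat.even_or_odd' x with ⟨y, rfl | rfl⟩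
    · left
      refine ⟨by omega, ?_⟩
      rw [show (2 * y) ^ 2 = 4 * y ^ 2 by ring]; omega
    · right
      refine ⟨by omega, ?_⟩
      rw [show (2 * y + 1) ^ 2 = 4 * (y ^ 2 + y) + 1 by ring]; omega
  have ha := sqm a
  have hb := sqm b
  exact not_common Nat.prime_two hprim (by omega) (by omega) ⟨c1, rfl⟩

lemma gcd_mem_ideal {R : Type*} [CommRing R] (T : Ideal R) {x y : ℕ} (hx : (x : R) ∈ T)
    (hy : (y : R) ∈ T) : ((Nat.gcd x y : ℕ) : R) ∈ T := by
  have e := congrArg (Int.cast : ℤ → R) (Nat.gcd_eq_gcd_ab x y)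
  push_cast at e
  rw [e]
  exact Ideal.add_mem _ (Ideal.mul_mem_right _ _ hx) (Ideal.mul_mem_right _ _ hy)

lemma QD.factor {n : ℕ} {K : Type} [Field K] [NumberField K] {ω : 𝓞 K}
    {σ : 𝓞 K ≃+* 𝓞 K} (h : QD n ω σ) (hsf : Squarefree n) {d e r a b c : ℕ}
    (hde : n = d * e) (hd4 : d % 4 = 1) (he4 : e % 4 = 1) (hr : r = 0 ∨ r = 1)
    (hc : 0 < c)
    (hprim : Nat.gcd a (Nat.gcd b c) = 1)
    (heq : 2 ^ r * c ^ 2 = d * a ^ 2 + e * b ^ 2) (D : Ideal (𝓞 K))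
    (hD : D * D = Ideal.span {((2 ^ r * d : ℕ) : 𝓞 K)}) :
    ∃ B : Ideal (𝓞 K), B ≠ ⊥ ∧ Ideal.absNorm B = c ∧ cl D * cl B ^ 2 = 1 := by
  have hd0 : 0 < d := by omega
  have hw := h.sq
  rw [hde] at hw
  push_cast at hw
  have heqK : (2 : 𝓞 K) ^ r * c ^ 2 = d * a ^ 2 + e * b ^ 2 := by exact_mod_cast heq
  set α : 𝓞 K := d * a + b * ω with hα
  have hσα : σ α = d * a - b * ω := by
    rw [hα]; simp only [map_add, map_mul, map_natCast, h.sw]; ring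
  have hαα : α * σ α = ((2 ^ r * d * c ^ 2 : ℕ) : 𝓞 K) := by
    rw [hσα, hα]
    push_cast
    linear_combination -(b : 𝓞 K) ^ 2 * hw - (d : 𝓞 K) * heqK
  have hNα : Ideal.absNorm (Ideal.span {α}) = 2 ^ r * d * c ^ 2 := by
    have := h.norm_abs α
    rw [hαα] at this
    exact_mod_cast this.symm
  have hND : Ideal.absNorm D = 2 ^ r * d := h.absNorm_of_sq hD
  have hpos : 0 < 2 ^ r * d := by positivity
  have hD0 : D ≠ ⊥ := by
    rintro rfl
    rw [Ideal.absNorm_bot] at hND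
    omega
  have hdvd : D ∣ Ideal.span {α} := by
    apply (UniqueFactorizationMonoid.pow_dvd_pow_iff_dvd (n := 2) (by norm_num)).mp
    rw [pow_two, pow_two, hD, Ideal.span_singleton_mul_span_singleton, Ideal.dvd_iff_le,
      Ideal.span_singleton_le_span_singleton]
    rcases hr with rfl | rfl
    · refine ⟨d * a ^ 2 - e * b ^ 2 + 2 * a * b * ω, ?_⟩
      rw [hα]; push_cast
      linear_combination (b : 𝓞 K) ^ 2 * hw
    · refine ⟨c ^ 2 - e * b ^ 2 + a * b * ω, ?_⟩
      rw [hα]; push_cast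
      linear_combination (b : 𝓞 K) ^ 2 * hw - (d : 𝓞 K) * heqK
  obtain ⟨E, hE⟩ := hdvd
  have hNE : Ideal.absNorm E = c ^ 2 := by
    have := congrArg Ideal.absNorm hE
    rw [map_mul, hNα, hND] at this
    exact (Nat.eq_of_mul_eq_mul_left hpos this).symm
  have hEσ : E * E.map σ = Ideal.span {(c : 𝓞 K)} * Ideal.span {(c : 𝓞 K)} := by
    rw [h.mul_conj, hNE, Ideal.span_singleton_mul_span_singleton]
    push_cast
    rw [pow_two]
  have hαE : α ∈ E := by
    have : Ideal.span {α} ≤ E := Ideal.dvd_iff_le.mp ⟨D, by rw [hE, mul_comm]⟩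
    exact (Ideal.span_singleton_le_iff_mem _).mp this
  have hT : E + Ideal.span {(c : 𝓞 K)} + E.map σ = 1 := by
    set T := E + Ideal.span {(c : 𝓞 K)} + E.map σ with hTd
    have hET : E ≤ T := le_sup_left.trans le_sup_left
    have hCT : Ideal.span {(c : 𝓞 K)} ≤ T := le_sup_right.trans le_sup_left
    have hET' : E.map σ ≤ T := le_sup_right
    have m1 : α ∈ T := hET hαE
    have m2 : σ α ∈ T := hET' (Ideal.mem_map_of_mem σ hαE)
    have m3 : (c : 𝓞 K) ∈ T := hCT (Ideal.mem_span_singleton_self _)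
    have m4 : ((2 * d * a : ℕ) : 𝓞 K) ∈ T := by
      have := Ideal.add_mem _ m1 m2
      convert this using 1
      rw [hσα, hα]; push_cast; ring
    have m5 : ((2 * n * b : ℕ) : 𝓞 K) ∈ T := by
      have := Ideal.mul_mem_left _ (-ω) (Ideal.sub_mem _ m1 m2)
      convert this using 1
      rw [hσα, hα, hde]; push_cast
      linear_combination 2 * (b : 𝓞 K) * hw
    have m6 := gcd_mem_ideal T m3 (gcd_mem_ideal T m4 m5)
    have hg : Nat.gcd c (Nat.gcd (2 * d * a) (2 * n * b)) = 1 := by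
      by_contra hne
      obtain ⟨q, hq, hqg⟩ := Nat.exists_prime_and_dvd hne
      have q1 : q ∣ c := hqg.trans (Nat.gcd_dvd_left _ _)
      have q2 : q ∣ 2 * d * a := hqg.trans ((Nat.gcd_dvd_right _ _).trans (Nat.gcd_dvd_left _ _))
      have q3 : q ∣ 2 * n * b := hqg.trans ((Nat.gcd_dvd_right _ _).trans (Nat.gcd_dvd_right _ _))
      have n2 : ¬ q ∣ 2 := by
        intro hd
        have := (Nat.prime_dvd_prime_iff_eq hq Nat.prime_two).mp hd
        subst this
        exact c_odd hd4 he4 heq hprim q1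
      have nn : ¬ q ∣ n := by
        intro hd
        rw [hde] at hd hsf
        exact c_coprime hq hsf hd heq hprim q1
      have nd : ¬ q ∣ d := fun hd => nn (hde ▸ hd.mul_right e)
      have qa : q ∣ a := by
        rcases hq.dvd_mul.mp q2 with h1 | h1
        · rcases hq.dvd_mul.mp h1 with h1 | h1
          · exact absurd h1 n2
          · exact absurd h1 nd
        · exact h1
      have qb : q ∣ b := by
        rcases hq.dvd_mul.mp q3 with h1 | h1
        · rcases hq.dvd_mul.mp h1 with h1 | h1
          · exact absurd h1 n2
          · exact absurd h1 nn
        · exact h1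
      exact not_common hq hprim qa qb q1
    rw [hg, Nat.cast_one] at m6
    rw [Ideal.one_eq_top, Ideal.eq_top_iff_one]
    exact m6
  have hBB : (E + Ideal.span {(c : 𝓞 K)}) * (E + Ideal.span {(c : 𝓞 K)}) = E := by
    calc (E + Ideal.span {(c : 𝓞 K)}) * (E + Ideal.span {(c : 𝓞 K)})
        = E * E + (E * Ideal.span {(c : 𝓞 K)} + E * Ideal.span {(c : 𝓞 K)})
          + Ideal.span {(c : 𝓞 K)} * Ideal.span {(c : 𝓞 K)} := by ring
      _ = E * E + E * Ideal.span {(c : 𝓞 K)} + E * E.map σ := by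
          rw [← hEσ, Ideal.add_eq_sup (I := E * Ideal.span {(c : 𝓞 K)}), sup_idem]
      _ = E * (E + Ideal.span {(c : 𝓞 K)} + E.map σ) := by ring
      _ = E := by rw [hT, mul_one]
  set B := E + Ideal.span {(c : 𝓞 K)} with hB
  have hNB : Ideal.absNorm B = c := by
    have := congrArg Ideal.absNorm hBB
    rw [map_mul, hNE, ← pow_two] at this
    exact Nat.pow_left_injective (by norm_num) this
  have hB0 : B ≠ ⊥ := by
    intro h0
    rw [h0, Ideal.absNorm_bot] at hNB
    omega
  refine ⟨B, hB0, hNB, ?_⟩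
  rw [pow_two, ← cl_mul hB0 hB0, hBB]
  have hE0 : E ≠ ⊥ := by rw [← hBB]; exact mul_ne_zero hB0 hB0
  rw [← cl_mul hD0 hE0, ← hE, cl_span]

lemma cl_prod {K : Type} [Field K] [NumberField K] {ι : Type*} (s : Finset ι)
    (f : ι → Ideal (𝓞 K)) (hf : ∀ i ∈ s, f i ≠ ⊥) : cl (∏ i ∈ s, f i) = ∏ i ∈ s, cl (f i) := by
  classical
  induction s using Finset.induction_on with
  | empty =>
    rw [Finset.prod_empty, Finset.prod_empty, Ideal.one_eq_top, ← Ideal.span_singleton_one, cl_span]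
  | insert i s hi ih =>
    have h1 : ∀ j ∈ s, f j ≠ ⊥ := fun j hj => hf j (Finset.mem_insert_of_mem hj)
    rw [Finset.prod_insert hi, Finset.prod_insert hi,
      cl_mul (hf i (Finset.mem_insert_self i s)) (Finset.prod_ne_zero_iff.mpr h1), ih h1]

lemma eq_of_sq_eq {K : Type} [Field K] [NumberField K] {I J : Ideal (𝓞 K)}
    (h : I * I = J * J) : I = J := by
  rw [← pow_two, ← pow_two] at h
  exact dvd_antisymm
    ((UniqueFactorizationMonoid.pow_dvd_pow_iff_dvd (by norm_num)).mp (dvd_of_eq h))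
    ((UniqueFactorizationMonoid.pow_dvd_pow_iff_dvd (by norm_num)).mp (dvd_of_eq h.symm))

lemma prod_span {K : Type} [Field K] [NumberField K] {ι : Type*} (s : Finset ι)
    (f : ι → ℕ) : ∏ i ∈ s, Ideal.span {((f i : ℕ) : 𝓞 K)} =
      Ideal.span {((∏ i ∈ s, f i : ℕ) : 𝓞 K)} := by
  rw [Ideal.prod_span_singleton]
  push_cast
  rfl

lemma prod_mod_four {ι : Type*} (s : Finset ι) (f : ι → ℕ) (hf : ∀ i ∈ s, f i % 4 = 1) :
    (∏ i ∈ s, f i) % 4 = 1 := by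
  have := Finset.prod_nat_mod s 4 f
  rw [this, Finset.prod_congr rfl hf]
  simp

lemma redei_entry {n k : ℕ} (p : Fin k → ℕ) (hp : ∀ i, (p i).Prime)
    (hinj : Function.Injective p) (hp4 : ∀ i, p i % 4 = 1) (hpn : ∀ i, p i ∣ n)
    (hpn' : ∀ i, ¬ p i ∣ n / p i) (i : Fin k) (j : Fin k ⊕ Unit) :
    redeiOfN n k p i j = chi n (p i) (Sum.elim p (fun _ => 2) j) := by
  have hpi : Fact (p i).Prime := ⟨hp i⟩
  unfold redeiOfN
  rcases j with j | j
  · simp only [Matrix.of_apply, Sum.elim_inl]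
    by_cases hij : i = j
    · subst hij
      rw [if_pos rfl, chi_self]
      obtain ⟨e, he⟩ := hpn i
      have hd := hpn' i
      have hdiv : n / p i = e := by rw [he, Nat.mul_div_cancel_left _ (hp i).pos]
      rw [hdiv] at hd ⊢
      have hp0 : (p i : ℤ) ≠ 0 := by exact_mod_cast (hp i).ne_zero
      have e1 : (-4 * (n : ℤ)) / (p i : ℤ) = (-4) * e := by
        apply Int.ediv_eq_of_eq_mul_right hp0
        rw [he]; push_cast; ring
      have h4 : ¬ (p i : ℤ) ∣ -4 := by
        rw [dvd_neg]
        intro h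
        have h2 : p i ∣ 2 ^ 2 := by exact_mod_cast h
        have := (Nat.prime_dvd_prime_iff_eq (hp i) Nat.prime_two).mp ((hp i).dvd_of_dvd_pow h2)
        have := hp4 i
        omega
      rw [e1, aLeg_mul h4 (by exact_mod_cast hd)]
      have : aLeg (-4) (p i) = 0 := by
        rw [aLeg_zero_iff]
        have hs : IsSquare (-1 : ZMod (p i)) :=
          ZMod.exists_sq_eq_neg_one_iff.mpr (by have := hp4 i; omega)
        obtain ⟨y, hy⟩ := hs
        exact ⟨2 * y, by push_cast; linear_combination 4 * hy⟩
      rw [this, zero_add]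
    · rw [if_neg hij, chi_coprime]
      intro h
      exact hij (hinj ((Nat.prime_dvd_prime_iff_eq (hp i) (hp j)).mp h))
  · simp only [Matrix.of_apply, Sum.elim_inr]
    rw [chi_coprime]
    · rfl
    · intro h
      have := (Nat.prime_dvd_prime_iff_eq (hp i) Nat.prime_two).mp h
      have := hp4 i
      omega

/-- with `𝔡` the product of the ramified primes over the prime divisors of `d`
times the `r`-th power of the ramified prime over `2`, the ideal class `[𝔡]` lies in `4A`
iff `C = ([c/p₁], …, [c/p_k])ᵀ` lies in the column image of the Rédei matrix `R`. -/
theorem stmt_9 (k : ℕ) (p : Fin k → ℕ) (hp : ∀ i, (p i).Prime)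
    (hinj : Function.Injective p)
    (n : ℕ) (hn : n = ∏ i, p i) (hp4 : ∀ i, p i % 4 = 1)
    (K : Type) [Field K] [NumberField K] (hdeg : Module.finrank ℚ K = 2)
    (ω : 𝓞 K) (hω : (ω : K) ^ 2 = -(n : K))
    (d : ℕ) (hd : d ∣ n) (r : ℕ) (hr : r = 0 ∨ r = 1)
    (hnorm : ∃ x : K, x ≠ 0 ∧ Algebra.norm ℚ x = ((2 ^ r * d : ℕ) : ℚ))
    (hnt1 : 2 ^ r * d ≠ 1) (hntn : 2 ^ r * d ≠ n)
    (a b c : ℕ) (ha : 0 < a) (hb : 0 < b) (hc : 0 < c)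
    (hprim : Nat.gcd a (Nat.gcd b c) = 1)
    (heq : 2 ^ r * c ^ 2 = d * a ^ 2 + (n / d) * b ^ 2)
    (P₂ : Ideal (𝓞 K)) (hP₂prime : P₂.IsPrime) (hP₂two : (2 : 𝓞 K) ∈ P₂) (hP₂bot : P₂ ≠ ⊥)
    (𝔡 : Ideal (𝓞 K))
    (h𝔡 : 𝔡 = (∏ i ∈ Finset.univ.filter (fun i => p i ∣ d),
        Ideal.span {((p i : ℕ) : 𝓞 K), ω}) * P₂ ^ r) :
    ∀ hmem : 𝔡 ∈ (Ideal (𝓞 K))⁰,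
      ((∃ cls : ClassGroup (𝓞 K), ClassGroup.mk0 ⟨𝔡, hmem⟩ = cls ^ 4) ↔
        ∃ Y : (Fin k ⊕ Unit) → ZMod 2,
          (redeiOfN n k p).mulVec Y = fun i => aLeg (c : ℤ) (p i)) := by
  intro hmem
  have hpn : ∀ i, p i ∣ n := fun i => hn ▸ Finset.dvd_prod_of_mem p (Finset.mem_univ i)
  have hsf : Squarefree n := by
    rw [hn]
    refine Finset.squarefree_prod_of_pairwise_isCoprime (fun i _ j _ hij => ?_)
      (fun i _ => (hp i).prime.squarefree)
    rw [Function.onFun, ← Nat.coprime_iff_isRelPrime]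
    exact (Nat.coprime_primes (hp i) (hp j)).mpr (fun e => hij (hinj e))
  have hpn' : ∀ i, ¬ p i ∣ n / p i := by
    rintro i ⟨x, hx⟩
    have h1 : n = p i * p i * x := by
      rw [mul_assoc, ← hx, Nat.mul_div_cancel' (hpn i)]
    exact (hp i).one_lt.ne' (Nat.isUnit_iff.mp (hsf (p i) ⟨x, h1⟩))
  have hn4 : n % 4 = 1 := by rw [hn]; exact prod_mod_four _ _ (fun i _ => hp4 i)
  have hn0 : 0 < n := by omega
  obtain ⟨σ, h⟩ := exists_QD n hn0 K hdeg ω hω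
  -- `d` as a product
  have hdprod : ∏ i ∈ Finset.univ.filter (fun i => p i ∣ d), p i = d := by
    have h1 := Nat.prod_primeFactors_of_squarefree (hsf.squarefree_of_dvd hd)
    have h2 : d.primeFactors = (Finset.univ.filter (fun i => p i ∣ d)).image p := by
      ext q
      rw [Nat.mem_primeFactors, Finset.mem_image]
      constructor
      · rintro ⟨hq, hqd, -⟩
        have hqn := hqd.trans hd
        rw [hn, (Nat.Prime.prime hq).dvd_finsetProd_iff] at hqn
        obtain ⟨i, -, hi⟩ := hqn
        have := (Nat.prime_dvd_prime_iff_eq hq (hp i)).mp hi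
        exact ⟨i, by simp [← this, hqd], this.symm⟩
      · rintro ⟨i, hi, rfl⟩
        refine ⟨hp i, by simpa using hi, ?_⟩
        rintro rfl
        simp at hd
        omega
    rw [h2, Finset.prod_image (fun i _ j _ e => hinj e)] at h1
    exact h1
  have hd4 : d % 4 = 1 := by rw [← hdprod]; exact prod_mod_four _ _ (fun i _ => hp4 i)
  have hde : n = d * (n / d) := (Nat.mul_div_cancel' hd).symm
  have he4 : (n / d) % 4 = 1 := by
    have h1 := hn4
    rw [hde, Nat.mul_mod, hd4, one_mul, Nat.mod_mod] at h1
    exact h1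
  -- the ramified primes
  have hP2 : P₂ = Ideal.span {(2 : 𝓞 K), 1 + ω} := by
    apply QD.eq_of_prime_norm _ _ hP₂prime.ne_top
    · rw [h.absNorm_of_sq (q := 2) (by simpa using h.ram_two hn4)]
      exact Nat.prime_two
    · rw [Ideal.span_le]
      rintro z (rfl | rfl)
      · exact hP₂two
      · apply hP₂prime.mem_of_pow_mem 2
        have h1 : (1 + ω) ^ 2 = (ω - 2 * ((n / 4 : ℕ) : 𝓞 K)) * 2 := by
          have h2 := h.sq
          obtain ⟨e, he⟩ : ∃ e, e = n / 4 := ⟨_, rfl⟩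
          have h3 : n = 4 * e + 1 := by omega
          rw [← he]
          rw [h3] at h2
          push_cast at h2
          linear_combination h2
        rw [h1]
        exact Ideal.mul_mem_left _ _ hP₂two
  have hP2sq : P₂ * P₂ = Ideal.span {((2 : ℕ) : 𝓞 K)} := by
    rw [hP2]; simpa using h.ram_two hn4
  set Q : Fin k ⊕ Unit → Ideal (𝓞 K) :=
    Sum.elim (fun i => Ideal.span {((p i : ℕ) : 𝓞 K), ω}) (fun _ => P₂) with hQ
  set β : Fin k ⊕ Unit → ℕ := Sum.elim p (fun _ => 2) with hβ
  have hQsq : ∀ j, Q j * Q j = Ideal.span {((β j : ℕ) : 𝓞 K)} := by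
    rintro (j | j)
    · exact h.ram_sq (hp j) (hpn j) (hpn' j)
    · exact hP2sq
  have hβp : ∀ j, (β j).Prime := by
    rintro (j | j)
    · exact hp j
    · exact Nat.prime_two
  have hQN : ∀ j, Ideal.absNorm (Q j) = β j := fun j => h.absNorm_of_sq (hQsq j)
  have hQ0 : ∀ j, Q j ≠ ⊥ := by
    intro j h0
    have h1 := hQN j
    rw [h0, Ideal.absNorm_bot] at h1
    exact (hβp j).ne_zero h1.symm
  have hcl2 : ∀ j, cl (Q j) ^ 2 = 1 := by
    intro j
    rw [pow_two, ← cl_mul (hQ0 j) (hQ0 j), hQsq, cl_span]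
  obtain ⟨Φ, hΦ⟩ := exists_phi (fun j => cl (Q j)) hcl2
  obtain ⟨G, hG⟩ := h.exists_genus p hp hpn hpn'
  have hGΦ : ∀ Y, G (Φ (Multiplicative.ofAdd Y)) =
      Multiplicative.ofAdd ((redeiOfN n k p).mulVec Y) := by
    intro Y
    rw [hΦ, map_prod]
    simp only [map_pow]
    rw [Finset.prod_congr rfl (fun j _ => by rw [hG _ (hQ0 j), hQN j, ← ofAdd_nsmul]),
      ← ofAdd_sum]
    congr 1
    funext i
    rw [Finset.sum_apply, Matrix.mulVec, dotProduct]
    refine Finset.sum_congr rfl fun j _ => ?_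
    rw [redei_entry p hp hinj hp4 hpn hpn' i j, Pi.smul_apply, nsmul_eq_mul,
      ZMod.natCast_zmod_val, mul_comm]
  have hM : ∀ m : Multiplicative (Fin k → ZMod 2), m ^ 2 = 1 := by
    intro m
    rw [pow_two]
    apply Multiplicative.toAdd.injective
    rw [toAdd_mul, toAdd_one]
    funext i
    exact CharTwo.add_self_eq_zero _
  have hGsurj : Function.Surjective G := by
    intro v
    obtain ⟨q, hq, hq2, hqv, hqs, hqn⟩ :=
      exists_prime_symbols p hp hinj hn hp4 (Multiplicative.toAdd v)
    obtain ⟨I, hI⟩ := h.split_norm hq hq2 hqn hqs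
    have hI0 : I ≠ ⊥ := by
      rintro rfl
      rw [Ideal.absNorm_bot] at hI
      exact hq.ne_zero hI.symm
    refine ⟨cl I, ?_⟩
    rw [hG I hI0, hI]
    apply Multiplicative.toAdd.injective
    funext i
    change chi n (p i) q = _
    rw [chi_coprime (hqv i).1, (hqv i).2]
  have htors : ∀ t : ClassGroup (𝓞 K), t ^ 2 = 1 → t ∈ Φ.range := by
    have hgen : ∀ j, cl (Q j) ∈ Φ.range := by
      intro j
      refine ⟨Multiplicative.ofAdd (Pi.single j 1), ?_⟩
      rw [hΦ, Finset.prod_eq_single j]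
      · simp [ZMod.val_one]
      · intro i _ hij
        simp [hij]
      · simp
    apply h.two_torsion
    rintro P hP hPb (h2 | ⟨q, hq, hqn, hqP, hwP⟩)
    · have : P = P₂ := by
        rw [hP2]
        apply QD.eq_of_prime_norm _ _ hP.ne_top
        · rw [h.absNorm_of_sq (q := 2) (by simpa using h.ram_two hn4)]
          exact Nat.prime_two
        · rw [Ideal.span_le]
          rintro z (rfl | rfl)
          · exact h2
          · apply hP.mem_of_pow_mem 2
            have h1 : (1 + ω) ^ 2 = (ω - 2 * ((n / 4 : ℕ) : 𝓞 K)) * 2 := by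
              have h2 := h.sq
              obtain ⟨e, he⟩ : ∃ e, e = n / 4 := ⟨_, rfl⟩
              have h3 : n = 4 * e + 1 := by omega
              rw [← he]
              rw [h3] at h2
              push_cast at h2
              linear_combination h2
            rw [h1]
            exact Ideal.mul_mem_left _ _ h2
      rw [this]
      exact hgen (Sum.inr ())
    · rw [hn, (Nat.Prime.prime hq).dvd_finsetProd_iff] at hqn
      obtain ⟨i, -, hi⟩ := hqn
      have hqi := (Nat.prime_dvd_prime_iff_eq hq (hp i)).mp hi
      have : P = Q (Sum.inl i) := by
        apply QD.eq_of_prime_norm _ _ hP.ne_top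
        · rw [hQN]; exact hβp _
        · change Ideal.span {((p i : ℕ) : 𝓞 K), ω} ≤ P
          rw [Ideal.span_le]
          rintro z (rfl | rfl)
          · rw [← hqi]; exact hqP
          · exact hwP
      rw [this]
      exact hgen _
  have hker : ∃ w, w ≠ 1 ∧ Φ w = 1 := by
    rcases Nat.eq_zero_or_pos k with hk | hk
    · subst hk
      refine ⟨Multiplicative.ofAdd (fun _ => 1), ?_, ?_⟩
      · intro h0
        have h1 := congrFun (congrArg Multiplicative.toAdd h0) (Sum.inr ())
        exact absurd h1 (by decide)
      · rw [hΦ]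
        have hn1 : n = 1 := by simpa using hn
        have hw := h.sq
        rw [hn1] at hw
        push_cast at hw
        have hP1 : P₂ = Ideal.span {1 + ω} := by
          apply eq_of_sq_eq
          rw [hP2sq, Ideal.span_singleton_mul_span_singleton]
          apply le_antisymm
          · rw [Ideal.span_singleton_le_span_singleton]
            exact ⟨-ω, by push_cast; linear_combination (2 + ω) * hw⟩
          · rw [Ideal.span_singleton_le_span_singleton]
            exact ⟨ω, by push_cast; linear_combination hw⟩
        simp [hQ, hP1, cl_span]
    · refine ⟨Multiplicative.ofAdd (Sum.elim (fun _ => 1) (fun _ => 0)), ?_, ?_⟩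
      · intro h0
        have h1 := congrFun (congrArg Multiplicative.toAdd h0) (Sum.inl ⟨0, hk⟩)
        change (1 : ZMod 2) = 0 at h1
        exact absurd h1 (by decide)
      · rw [hΦ, Fintype.prod_sum_type]
        have hprod : ∏ i : Fin k, Q (Sum.inl i) = Ideal.span {ω} := by
          apply eq_of_sq_eq
          rw [← Finset.prod_mul_distrib, Finset.prod_congr rfl (fun i _ => hQsq (Sum.inl i)),
            prod_span, Ideal.span_singleton_mul_span_singleton, h.sq,
            Ideal.span_singleton_neg, hn]
          rfl
        have h2 := cl_prod Finset.univ (fun i : Fin k => Q (Sum.inl i)) (fun i _ => hQ0 _)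
        rw [hprod, cl_span] at h2
        simp only [Sum.elim_inl, Sum.elim_inr, ZMod.val_one, ZMod.val_zero, pow_one, pow_zero,
          Finset.prod_const_one, mul_one]
        exact h2.symm
  have hcard : Nat.card (Multiplicative ((Fin k ⊕ Unit) → ZMod 2)) =
      2 * Nat.card (Multiplicative (Fin k → ZMod 2)) := by
    have e1 : Nat.card (Multiplicative ((Fin k ⊕ Unit) → ZMod 2)) = 2 ^ (k + 1) := by
      rw [Nat.card_congr Multiplicative.toAdd, Nat.card_eq_fintype_card]
      simp
    have e2 : Nat.card (Multiplicative (Fin k → ZMod 2)) = 2 ^ k := by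
      rw [Nat.card_congr Multiplicative.toAdd, Nat.card_eq_fintype_card]
      simp
    rw [e1, e2, pow_succ, mul_comm]
  -- the square of `𝔡`
  have hDsq : 𝔡 * 𝔡 = Ideal.span {((2 ^ r * d : ℕ) : 𝓞 K)} := by
    have hps : ∀ i, Ideal.span {((p i : ℕ) : 𝓞 K), ω} * Ideal.span {((p i : ℕ) : 𝓞 K), ω} =
        Ideal.span {((p i : ℕ) : 𝓞 K)} := fun i => h.ram_sq (hp i) (hpn i) (hpn' i)
    rw [h𝔡, mul_mul_mul_comm, ← Finset.prod_mul_distrib,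
      Finset.prod_congr rfl (fun i _ => hps i), prod_span]
    rw [hdprod, ← mul_pow, hP2sq, Ideal.span_singleton_pow, Ideal.span_singleton_mul_span_singleton]
    congr 2
    push_cast
    ring
  obtain ⟨B, hB0, hBN, hDB⟩ := h.factor hsf hde hd4 he4 hr hc hprim heq 𝔡 hDsq
  rw [← cl_eq hmem]
  have hGB : G (cl B) = Multiplicative.ofAdd (fun i => aLeg (c : ℤ) (p i)) := by
    rw [hG B hB0, hBN]
    congr 1
    funext i
    apply chi_coprime
    refine c_coprime (hp i) (hde ▸ hsf) (hde ▸ hpn i) heq hprim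
  constructor
  · rintro ⟨s, hs⟩
    have ht : (cl B * s ^ 2) ^ 2 = 1 := by
      rw [mul_pow, ← pow_mul, ← hs, mul_comm]; exact hDB
    obtain ⟨Y, hY⟩ := htors _ ht
    refine ⟨Multiplicative.toAdd Y, ?_⟩
    have h1 := hGΦ (Multiplicative.toAdd Y)
    rw [ofAdd_toAdd, hY, map_mul, map_pow, hM, mul_one, hGB] at h1
    exact (Multiplicative.ofAdd.injective h1).symm
  · rintro ⟨Y, hY⟩
    have h1 : G (cl B * Φ (Multiplicative.ofAdd Y)) = 1 := by
      rw [map_mul, hGΦ, hY, hGB, ← pow_two, hM]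
    obtain ⟨s, hs⟩ := group_count G hGsurj hM Φ hcard hker htors _ h1
    refine ⟨s⁻¹, ?_⟩
    have h2 : (Φ (Multiplicative.ofAdd Y)) ^ 2 = 1 := by
      rw [← map_pow]
      have : (Multiplicative.ofAdd Y) ^ 2 = 1 := by
        rw [pow_two]
        apply Multiplicative.toAdd.injective
        rw [toAdd_mul, toAdd_one]
        funext i
        exact CharTwo.add_self_eq_zero _
      rw [this, map_one]
    have h3 : cl B ^ 2 = s ^ 4 := by
      calc cl B ^ 2 = (cl B * Φ (Multiplicative.ofAdd Y)) ^ 2 := by rw [mul_pow, h2, mul_one]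
        _ = s ^ 4 := by rw [hs, ← pow_mul]
    rw [h3] at hDB
    rw [inv_pow]
    exact eq_inv_of_mul_eq_one_left hDB
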